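/- Let K ⊆ ℝ² be a Minkowski centered convex body with s(K) ≥ φ, and let z¹, z², z³ ∈ bd(K) ∩ bd(−K) be pairwise linearly independent points such that z¹, z² are consecutive and z², z³ are consecutive. If there is an asymmetry point of K in pos{z¹, z²}, then there is no asymmetry point of K in pos{z², z³}. -/

import Mathlib

open scoped Pointwise RealInnerProductSpace
open Set

noncomputable section

abbrev E2 := EuclideanSpace ℝ (Fin 2)

/-- A convex body: compact convex set with nonempty interior. -/
def IsConvexBody (K : Set E2) : Prop :=
  Convex ℝ K ∧ IsCompact K ∧ (interior K).Nonempty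

/-- circumradius `R(K,C)` -/
def circum (K C : Set E2) : ℝ :=
  sInf {ρ : ℝ | 0 < ρ ∧ ∃ t : E2, K ⊆ ρ • C + {t}}

/-- inradius `r(K,C)` -/
def inrad (K C : Set E2) : ℝ :=
  sSup {ρ : ℝ | 0 < ρ ∧ ∃ t : E2, ρ • C + {t} ⊆ K}

/-- width `w(K,C)` -/
def widthB (K C : Set E2) : ℝ := 2 * inrad (K - K) (C - C)

/-- diameter `D(K,C)` -/
def diamB (K C : Set E2) : ℝ := 2 * circum (K - K) (C - C)

/-- Minkowski asymmetry `s(K)` -/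
def minkAsym (K : Set E2) : ℝ :=
  sInf {ρ : ℝ | 0 < ρ ∧ ∃ c : E2, K - {c} ⊆ ρ • ({c} - K)}

/-- `K` is Minkowski centered -/
def MinkCentered (K : Set E2) : Prop := K ⊆ minkAsym K • (-K)

/-- `τ(K)`: smallest `ρ > 0` with `K ∩ (-K) ⊆ ρ • ((K-K)/2)` -/
def tauB (K : Set E2) : ℝ :=
  sInf {ρ : ℝ | 0 < ρ ∧ K ∩ (-K) ⊆ ρ • ((2:ℝ)⁻¹ • (K - K))}

/-- golden ratio -/
def phiR : ℝ := (1 + Real.sqrt 5) / 2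

def cExpr2 (s : ℝ) : ℝ :=
  (s^2+1)^2 / ((s^2-1) * (s^2+2*s-1+2*Real.sqrt (s*(s^2-1))))

def cExpr3 (s : ℝ) : ℝ := 2*(s^2-2*s-1) / ((s-3)*(s+1))

/-- `ŝ`: the unique `s ∈ (φ,2)` where the two expressions agree. -/
def sHat : ℝ := sInf {s : ℝ | phiR < s ∧ s < 2 ∧ cExpr2 s = cExpr3 s}

def cFun (s : ℝ) : ℝ :=
  if s ≤ phiR then 1 else if s ≤ sHat then cExpr2 s else cExpr3 s

/-- polar body -/
def polarBody (K : Set E2) : Set E2 := {y | ∀ x ∈ K, (inner ℝ x y : ℝ) ≤ 1}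

/-- `γ(K)` -/
def gammaB (K : Set E2) : ℝ :=
  sInf {ρ : ℝ | 0 < ρ ∧
    polarBody ((2:ℝ)⁻¹ • (polarBody K - polarBody K)) ⊆ ρ • convexHull ℝ (K ∪ -K)}

/-- positive hull of two points -/
def posHull2 (a b : E2) : Set E2 := {x | ∃ α β : ℝ, 0 ≤ α ∧ 0 ≤ β ∧ x = α • a + β • b}

/-- asymmetry point of `K`: a point of `bd(K) ∩ bd(−(1/s(K))·K)` -/
def IsAsymPoint (K : Set E2) (p : E2) : Prop :=
  p ∈ frontier K ∧ p ∈ frontier ((-(minkAsym K)⁻¹) • K)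

/-- a well-spread triple of asymmetry points -/
def WellSpread (K : Set E2) (p1 p2 p3 : E2) : Prop :=
  IsAsymPoint K p1 ∧ IsAsymPoint K p2 ∧ IsAsymPoint K p3 ∧
  ∃ a1 a2 a3 : E2, a1 ≠ 0 ∧ a2 ≠ 0 ∧ a3 ≠ 0 ∧
    (∀ x ∈ K, (inner ℝ a1 x : ℝ) ≤ inner ℝ a1 p1) ∧
    (∀ x ∈ K, (inner ℝ a2 x : ℝ) ≤ inner ℝ a2 p2) ∧
    (∀ x ∈ K, (inner ℝ a3 x : ℝ) ≤ inner ℝ a3 p3) ∧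
    (0:E2) ∈ interior (convexHull ℝ {p1, p2, p3}) ∧
    (0:E2) ∈ convexHull ℝ {a1, a2, a3}

/-- two points of `bd(K) ∩ bd(-K)` are consecutive -/
def Consecutive (K : Set E2) (z1 z2 : E2) : Prop :=
  ¬ ∃ z, z ∈ frontier K ∩ frontier (-K) ∧ z ∈ interior (posHull2 z1 z2)

/-- point of the plane from coordinates -/
def pt (x y : ℝ) : E2 := (WithLp.equiv 2 (Fin 2 → ℝ)).symm ![x, y]

/-- the golden house -/
def goldenHouse : Set E2 :=
  convexHull ℝ {pt 1 0, pt (-1) 0, pt 1 (-1), pt (-1) (-1), pt 0 phiR}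



lemma core_alg1 (k x r δ : ℝ) (hk : 0 < k) (hk1 : k < 1) (hx0 : 0 ≤ x)
    (b1 : r * (1 - k) ≤ k - δ) (b4 : 1 - r * k ≤ (-δ + r * k) * x) :
    (1 - k) * (1 + δ * x) ≤ k * (1 + x) * (k - δ) := by
  have : 1 + δ * x ≤ r * k * (1 + x) := by linarith
  have h := mul_le_mul_of_nonneg_left this (by linarith : (0:ℝ) ≤ 1 - k)
  have h' := mul_le_mul_of_nonneg_left b1 (by positivity : (0:ℝ) ≤ k * (1 + x))
  linarith

lemma core_alg2 (k x r δ : ℝ) (hk : 0 < k) (hk1 : k < 1) (hx1 : x ≤ 1) (hr : 0 < r)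
    (b2 : r * (1 - k) ≤ k + δ) (b3 : 1 + (r - k) * x ≤ r * k) :
    (1 - k * x) * (1 - k) ≤ (k + δ) * (k - x) := by
  have h0 : 1 - k * x ≤ r * (k - x) := by linarith
  have hkx : 0 < k - x := by
    have : 0 < r * (k - x) := by nlinarith
    exact pos_of_mul_pos_right this hr.le
  have h := mul_le_mul_of_nonneg_left h0 (by linarith : (0:ℝ) ≤ 1 - k)
  have h' := mul_le_mul_of_nonneg_left b2 hkx.le
  linarith

lemma core_alg3 (k x δ : ℝ) (hk : 0 < k) (hk1 : k < 1) (hx0 : 0 ≤ x) (hδ : 0 ≤ δ)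
    (hT : k ^ 2 ≤ 1 - k)
    (A : (1 - k) * (1 + δ * x) ≤ k * (1 + x) * (k - δ))
    (B : (1 - k * x) * (1 - k) ≤ (k + δ) * (k - x)) : 1 - k = k ^ 2 ∧ δ = 0 ∧ x = 0 := by
  have hδx : 0 ≤ δ * x := by positivity
  have hS : 2 * (δ * x) ≤ 2 * k ^ 2 - 2 * (1 - k) := by linarith
  have hδx0 : δ * x = 0 := by linarith
  have hk2 : 1 - k = k ^ 2 := by linarith
  have hδ0 : δ = 0 := by
    rcases mul_eq_zero.1 hδx0 with h | h
    · exact h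
    · subst h
      nlinarith
  subst hδ0
  refine ⟨hk2, rfl, ?_⟩
  have h1 : k * (k * (1 - k * x)) ≤ k * (k - x) := by rw [hk2] at B; linarith
  have := le_of_mul_le_mul_left h1 hk
  nlinarith

lemma core_key (k d1 x r m e1 xe r' m' e1' xe' : ℝ) (hk : 0 < k) (hk1 : k < 1)
    (hT : k ^ 2 ≤ 1 - k)
    (hm : m = d1 + r * e1) (hm' : m' = d1 + r' * e1') (hm0 : 0 ≤ m) (hm0' : m' ≤ 0)
    (hr : 0 < r) (hr' : 0 < r')
    (hx0 : 0 ≤ x) (hx1 : x ≤ 1) (hxe : xe ≤ 1) (hxe' : -1 ≤ xe')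
    (he : e1 ≤ k) (he' : -k ≤ e1')
    (h1 : 1 - r * k ≤ m * x) (h2 : r - k ≤ m * xe)
    (h1' : 1 - r' * k ≤ m' * x) (h2' : r' - k ≤ m' * xe') : e1 = k ∧ e1' = -k := by
  have a1 : r - k ≤ m := by
    have := mul_le_mul_of_nonneg_left hxe hm0
    linarith
  have a2 : m ≤ d1 + r * k := by
    have := mul_le_mul_of_nonneg_left he hr.le
    linarith
  have a3 : r' - k ≤ -m' := by
    have := mul_le_mul_of_nonpos_left hxe' hm0'
    linarith
  have a4 : -m' ≤ -d1 + r' * k := by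
    have := mul_le_mul_of_nonneg_left he' hr'.le
    linarith
  have b1 : r * (1 - k) ≤ k + d1 := by linarith
  have b2 : r' * (1 - k) ≤ k - d1 := by linarith
  have b3 : 1 + (r' - k) * x ≤ r' * k := by
    have := mul_le_mul_of_nonneg_right a3 hx0
    linarith
  have b3' : 1 ≤ r' * k := by
    have := mul_nonneg (neg_nonneg.2 hm0') hx0
    linarith
  have b4 : 1 - r * k ≤ (d1 + r * k) * x := h1.trans (mul_le_mul_of_nonneg_right a2 hx0)
  have hd : d1 ≤ 0 := by
    have i1 : 1 * (1 - k) ≤ (r' * k) * (1 - k) := mul_le_mul_of_nonneg_right b3' (by linarith)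
    have i2 := mul_le_mul_of_nonneg_left b2 hk.le
    have : k * d1 ≤ 0 := by linarith
    exact nonpos_of_mul_nonpos_right this hk
  obtain ⟨hk2, hδ, rfl⟩ := core_alg3 k x (-d1) hk hk1 hx0 (by linarith) hT
    (core_alg1 k x r (-d1) hk hk1 hx0 (by linarith) (by linarith))
    (core_alg2 k x r' (-d1) hk hk1 hx1 hr' (by linarith) b3)
  have hd0 : d1 = 0 := by linarith
  subst hd0
  have hrk : r * k = 1 := by
    rw [hk2] at b1
    have : k * (r * k) ≤ k * 1 := by linarith
    have := le_of_mul_le_mul_left this hk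
    linarith
  have hrk' : r' * k = 1 := by
    rw [hk2] at b2
    have : k * (r' * k) ≤ k * 1 := by linarith
    have := le_of_mul_le_mul_left this hk
    linarith
  constructor
  · apply le_antisymm he
    have h5 : r * (1 - k) = k := by
      rw [hk2, show r * k ^ 2 = (r * k) * k by ring, hrk, one_mul]
    have : r * k ≤ r * e1 := by linarith
    exact le_of_mul_le_mul_left this hr
  · apply le_antisymm _ he'
    have h5 : r' * (1 - k) = k := by
      rw [hk2, show r' * k ^ 2 = (r' * k) * k by ring, hrk', one_mul]
    have : r' * e1' ≤ r' * (-k) := by linarith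
    exact le_of_mul_le_mul_left this hr'

/-- planar version, with `d`, `e`, `f` functionals and `(x?, y?)` the points. -/
lemma plane_key (k d1 d2 e1 e2 f1 f2 xd yd xe ye xf yf : ℝ) (hk : 0 < k) (hk1 : k < 1)
    (hT : k ^ 2 ≤ 1 - k) (hd2 : 0 < d2) (he2 : e2 < 0) (hf2 : f2 < 0)
    (hxd : |xd| ≤ 1) (hxe : |xe| ≤ 1) (hxf : |xf| ≤ 1)
    (he : |e1| ≤ k) (hf : |f1| ≤ k)
    (hd' : d1 * xd + d2 * yd = 1) (he' : e1 * xe + e2 * ye = 1) (hf' : f1 * xf + f2 * yf = 1)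
    (h1 : -k ≤ d1 * xe + d2 * ye) (h2 : -k ≤ d1 * xf + d2 * yf)
    (h3 : -k ≤ e1 * xd + e2 * yd) (h4 : -k ≤ f1 * xd + f2 * yd)
    (hm : 0 ≤ d1 * (-e2) + d2 * e1) (hm' : d1 * (-f2) + d2 * f1 ≤ 0) :
    e1 = k := by
  rw [abs_le] at *
  obtain ⟨r, hr, hre⟩ : ∃ r, 0 < r ∧ d2 = r * (-e2) :=
    ⟨d2 / (-e2), by apply div_pos <;> linarith, (div_mul_cancel₀ _ (by linarith)).symm⟩
  obtain ⟨r', hr', hrf⟩ : ∃ r, 0 < r ∧ d2 = r * (-f2) :=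
    ⟨d2 / (-f2), by apply div_pos <;> linarith, (div_mul_cancel₀ _ (by linarith)).symm⟩
  have m0 : 0 ≤ d1 + r * e1 := by
    have : 0 ≤ (-e2) * (d1 + r * e1) := by rw [hre] at hm; linarith
    exact nonneg_of_mul_nonneg_right this (by linarith)
  have m0' : d1 + r' * f1 ≤ 0 := by
    have : 0 ≤ (-f2) * (-(d1 + r' * f1)) := by rw [hrf] at hm'; linarith
    have := nonneg_of_mul_nonneg_right this (by linarith)
    linarith
  have i1 : 1 - r * k ≤ (d1 + r * e1) * xd := by
    have := mul_le_mul_of_nonneg_left h3 hr.le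
    have e : d2 * yd = -(r * (e2 * yd)) := by rw [hre]; ring
    nlinarith
  have i2 : r - k ≤ (d1 + r * e1) * xe := by
    have e : d2 * ye = -(r * (e2 * ye)) := by rw [hre]; ring
    have e' : e2 * ye = 1 - e1 * xe := by linarith
    rw [e, e'] at h1
    linarith
  have i1' : 1 - r' * k ≤ (d1 + r' * f1) * xd := by
    have := mul_le_mul_of_nonneg_left h4 hr'.le
    have e : d2 * yd = -(r' * (f2 * yd)) := by rw [hrf]; ring
    nlinarith
  have i2' : r' - k ≤ (d1 + r' * f1) * xf := by
    have e : d2 * yf = -(r' * (f2 * yf)) := by rw [hrf]; ring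
    have e' : f2 * yf = 1 - f1 * xf := by linarith
    rw [e, e'] at h2
    linarith
  rcases le_total 0 xd with hx | hx
  · exact (core_key k d1 xd r _ e1 xe r' _ f1 xf hk hk1 hT rfl rfl m0 m0' hr hr' hx hxd.2 hxe.2
      hxf.1 he.2 hf.1 i1 i2 i1' i2').1
  · have := (core_key k (-d1) (-xd) r' (-(d1 + r' * f1)) (-f1) (-xf) r (-(d1 + r * e1)) (-e1) (-xe)
      hk hk1 hT (by ring) (by ring) (by linarith) (by linarith) hr' hr (by linarith) (by linarith)
      (by linarith) (by linarith) (by linarith) (by linarith) (by linarith) (by linarith)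
      (by linarith) (by linarith)).2
    linarith

lemma zero_int {K : Set E2} {s : ℝ} (hs : 0 < s) (hK : IsConvexBody K)
    (hc : ∀ x ∈ K, ∃ k ∈ K, x = -(s • k)) : (0 : E2) ∈ interior K := by
  obtain ⟨hconv, -, c, hcI⟩ := hK
  obtain ⟨k, hk, hck⟩ := hc c (interior_subset hcI)
  apply hconv.openSegment_interior_self_subset_interior hcI hk
  refine ⟨1 / (1 + s), s / (1 + s), by positivity, by positivity, by field_simp, ?_⟩
  rw [hck]
  module

lemma optimality {K : Set E2} (hK : IsConvexBody K) (h0 : (0 : E2) ∈ interior K)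
    (hs : 0 < minkAsym K)
    (hc : ∀ x ∈ K, ∃ k ∈ K, x = -(minkAsym K • k)) (v : E2) :
    ∃ g : E2, (∀ x ∈ K, -(minkAsym K)⁻¹ ≤ inner ℝ g x) ∧ (∃ P ∈ K, inner ℝ g P = (1:ℝ)) ∧
      inner ℝ g v ≤ (0:ℝ) := by
  obtain ⟨hconv, hcomp, -⟩ := hK
  set s := minkAsym K with hsdef
  have step : ∀ ε : ℝ, 0 < ε → ε ^ 2 < s → ∃ q : E2 × E2, q ∈ Metric.sphere (0:E2) 1 ×ˢ K ∧
      (∀ k ∈ K, (s - ε ^ 2) * (ε * inner ℝ q.1 v - inner ℝ q.1 k) ≤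
        inner ℝ q.1 q.2 - ε * inner ℝ q.1 v) ∧
      (1 + (s - ε ^ 2)) * inner ℝ q.1 v ≤ ε * (inner ℝ q.1 q.2 / s) := by
    intro ε hε hεs
    set ρ := s - ε ^ 2 with hρ
    have hρ0 : 0 < ρ := by linarith
    have hn : ρ ∉ {ρ : ℝ | 0 < ρ ∧ ∃ c : E2, K - {c} ⊆ ρ • ({c} - K)} := by
      apply notMem_of_lt_csInf
      · change ρ < s
        have : 0 < ε ^ 2 := by positivity
        linarith
      · exact ⟨0, fun x hx => hx.1.le⟩
    have hn2 : ¬ (K - {ε • v} ⊆ ρ • ({ε • v} - K)) := fun h => hn ⟨hρ0, _, h⟩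
    obtain ⟨y, hy, hy2⟩ := Set.not_subset.1 hn2
    obtain ⟨x, hx, c, hcc, rfl⟩ := hy
    rw [Set.mem_singleton_iff] at hcc
    subst hcc
    have hC : IsCompact (ρ • ({ε • v} - K)) := by
      rw [sub_eq_add_neg]
      exact (isCompact_singleton.add hcomp.neg).smul ρ
    have hCc : Convex ℝ (ρ • ({ε • v} - K)) := ((convex_singleton _).sub hconv).smul ρ
    obtain ⟨f, u, hf1, hf2⟩ := geometric_hahn_banach_closed_point hCc hC.isClosed hy2
    have hfk : ∀ k ∈ K, ρ * (ε * f v - f k) < f x - ε * f v := by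
      intro k hk
      have := hf1 (ρ • (ε • v - k)) (Set.smul_mem_smul_set (Set.sub_mem_sub rfl hk))
      have := this.trans hf2
      simpa using this
    have hf0 : f ≠ 0 := by
      rintro rfl
      have := hfk x hx
      simp at this
    obtain ⟨g, hg⟩ : ∃ g : E2, ∀ z, inner ℝ g z = f z :=
      ⟨(InnerProductSpace.toDual ℝ E2).symm f, fun z => by simp⟩
    have hg0 : g ≠ 0 := by
      rintro rfl
      apply hf0
      ext z
      rw [← hg]
      simp
    have hng : 0 < ‖g‖ := norm_pos_iff.2 hg0
    have hng' : 0 < ‖g‖⁻¹ := inv_pos.2 hng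
    have hfk' : ∀ k ∈ K, ρ * (ε * inner ℝ (‖g‖⁻¹ • g) v - inner ℝ (‖g‖⁻¹ • g) k) ≤
        inner ℝ (‖g‖⁻¹ • g) x - ε * inner ℝ (‖g‖⁻¹ • g) v := by
      intro k hk
      have h := mul_le_mul_of_nonneg_left (hfk k hk).le hng'.le
      simp only [inner_smul_left, hg]
      simp
      linarith
    refine ⟨(‖g‖⁻¹ • g, x), ⟨?_, hx⟩, hfk', ?_⟩
    · simp [norm_smul, hng.ne']
    · obtain ⟨k, hk, hxk⟩ := hc x hx
      have h := hfk' k hk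
      simp only
      set G := ‖g‖⁻¹ • g
      have hx' : inner ℝ G x = -(s * inner ℝ G k) := by rw [hxk]; simp [inner_smul_right]
      have e1 : inner ℝ G x / s = - inner ℝ G k := by rw [hx']; field_simp
      rw [e1]
      rw [hx'] at h
      have : ε * ((1 + ρ) * inner ℝ G v) ≤ ε * (ε * -inner ℝ G k) := by
        have : s = ρ + ε ^ 2 := by rw [hρ]; ring
        rw [this] at h
        linarith
      exact le_of_mul_le_mul_left this hε
  obtain ⟨c0, hc0, hc0s⟩ : ∃ c0 : ℝ, 0 < c0 ∧ c0 ^ 2 < s := by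
    refine ⟨min 1 (s / 2), by positivity, ?_⟩
    have h1 := min_le_left 1 (s / 2)
    have h2 := min_le_right 1 (s / 2)
    have h3 : 0 < min 1 (s / 2) := by positivity
    nlinarith
  let ε : ℕ → ℝ := fun n => c0 / (n + 1)
  have hεpos : ∀ n, 0 < ε n := fun n => by positivity
  have hεle : ∀ n, ε n ≤ c0 := fun n => div_le_self hc0.le (by linarith [n.cast_nonneg (α := ℝ)])
  have hεlim : Filter.Tendsto ε Filter.atTop (nhds 0) := by
    have := (tendsto_one_div_add_atTop_nhds_zero_nat (𝕜 := ℝ)).const_mul c0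
    simpa [ε, div_eq_mul_inv] using this
  choose q hq1 hq2 hq3 using fun n => step (ε n) (hεpos n)
    (lt_of_le_of_lt (pow_le_pow_left₀ (hεpos n).le (hεle n) 2) hc0s)
  obtain ⟨⟨g, x⟩, ⟨hg, hx⟩, φ, hφ, hlim⟩ := ((isCompact_sphere (0:E2) 1).prod hcomp).tendsto_subseq hq1
  have hεφ : Filter.Tendsto (fun n => ε (φ n)) Filter.atTop (nhds 0) := hεlim.comp hφ.tendsto_atTop
  have l1 : Filter.Tendsto (fun n => (q (φ n)).1) Filter.atTop (nhds g) :=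
    (continuous_fst.tendsto _).comp hlim
  have l2 : Filter.Tendsto (fun n => (q (φ n)).2) Filter.atTop (nhds x) :=
    (continuous_snd.tendsto _).comp hlim
  have lv : ∀ w : E2, Filter.Tendsto (fun n => inner ℝ (q (φ n)).1 w) Filter.atTop
      (nhds (inner ℝ g w)) := fun w => l1.inner tendsto_const_nhds
  have lx : Filter.Tendsto (fun n => inner ℝ (q (φ n)).1 (q (φ n)).2) Filter.atTop
      (nhds (inner ℝ g x)) := l1.inner l2
  have c1 : ∀ k ∈ K, -(s * inner ℝ g k) ≤ inner ℝ g x := by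
    intro k hk
    have := le_of_tendsto_of_tendsto'
      (((tendsto_const_nhds (x := s)).sub (hεφ.pow 2)).mul ((hεφ.mul (lv v)).sub (lv k)))
      (lx.sub (hεφ.mul (lv v))) (fun n => hq2 (φ n) k hk)
    simp at this
    linarith
  have c2 : inner ℝ g v ≤ (0:ℝ) := by
    have := le_of_tendsto_of_tendsto'
      (((tendsto_const_nhds (x := (1:ℝ))).add ((tendsto_const_nhds (x := s)).sub (hεφ.pow 2))).mul (lv v))
      (hεφ.mul (lx.div_const s)) (fun n => hq3 (φ n))
    simp at this
    nlinarith
  have hgn : ‖g‖ = 1 := by simpa using hg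
  have hgx : 0 < inner ℝ g x := by
    obtain ⟨δ, hδ, hball⟩ := Metric.mem_nhds_iff.1 (mem_interior_iff_mem_nhds.1 h0)
    have hk : -((δ / 2) • g) ∈ K := by
      apply hball
      simp [norm_smul, hgn, abs_of_pos hδ]
      linarith
    have h := c1 _ hk
    have e : inner ℝ g (-((δ / 2) • g)) = -(δ / 2) := by
      simp [inner_smul_right, hgn]
    rw [e] at h
    have : 0 < s * (δ / 2) := by positivity
    linarith
  refine ⟨(inner ℝ g x)⁻¹ • g, ?_, ⟨x, hx, ?_⟩, ?_⟩
  · intro k hk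
    have h := c1 k hk
    rw [real_inner_smul_left, neg_le, ← mul_neg, inv_mul_eq_div, div_le_iff₀ hgx,
      inv_mul_eq_div, le_div_iff₀ hs]
    linarith
  · rw [real_inner_smul_left]
    exact inv_mul_cancel₀ hgx.ne'
  · rw [real_inner_smul_left]
    exact mul_nonpos_of_nonneg_of_nonpos (inv_nonneg.2 hgx.le) c2

def dt (u v : E2) : ℝ := u 0 * v 1 - u 1 * v 0

lemma dt_cramer (z1 z2 u : E2) (h : dt z1 z2 ≠ 0) :
    u = (dt u z2 / dt z1 z2) • z1 + (dt z1 u / dt z1 z2) • z2 := by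
  ext i
  fin_cases i
  · simp
    field_simp
    simp [dt]
    ring
  · simp
    field_simp
    simp [dt]
    ring

lemma dt_left (z1 z2 : E2) (a b : ℝ) : dt (a • z1 + b • z2) z2 = a * dt z1 z2 := by
  simp [dt]; ring

lemma dt_right (z1 z2 : E2) (a b : ℝ) : dt z1 (a • z1 + b • z2) = b * dt z1 z2 := by
  simp [dt]; ring

lemma dt_ne {z1 z2 : E2} (h : LinearIndependent ℝ ![z1, z2]) : dt z1 z2 ≠ 0 := by
  intro hd
  have hz1 : z1 ≠ 0 := h.ne_zero 0
  rw [LinearIndependent.pair_iff] at h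
  simp only [dt] at hd
  have e1 : (z2 0) • z1 + (-(z1 0)) • z2 = 0 := by
    ext i; fin_cases i <;> simp <;> linarith
  have e2 : (z2 1) • z1 + (-(z1 1)) • z2 = 0 := by
    ext i; fin_cases i <;> simp <;> linarith
  have h1 := (h _ _ e1).2
  have h2 := (h _ _ e2).2
  apply hz1
  ext i
  fin_cases i
  · simpa using h1
  · simpa using h2

lemma cone_int {z1 z2 : E2} (h : dt z1 z2 ≠ 0) {a b : ℝ} (ha : 0 < a) (hb : 0 < b) :
    a • z1 + b • z2 ∈ interior (posHull2 z1 z2) := by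
  have hsub : {u : E2 | 0 < dt u z2 / dt z1 z2 ∧ 0 < dt z1 u / dt z1 z2} ⊆ posHull2 z1 z2 :=
    fun u hu => ⟨_, _, hu.1.le, hu.2.le, dt_cramer z1 z2 u h⟩
  have hop : IsOpen {u : E2 | 0 < dt u z2 / dt z1 z2 ∧ 0 < dt z1 u / dt z1 z2} := by
    refine IsOpen.and (isOpen_lt continuous_const ?_) (isOpen_lt continuous_const ?_)
    · unfold dt
      fun_prop
    · unfold dt
      fun_prop
  apply interior_maximal hsub hop
  constructor
  · rw [dt_left, mul_div_cancel_right₀ _ h]; exact ha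
  · rw [dt_right, mul_div_cancel_right₀ _ h]; exact hb

lemma mem_bd {K : Set E2} (hconv : Convex ℝ K) (h0 : K ∈ nhds (0:E2)) (z : E2) :
    z ∈ frontier K ∩ frontier (-K) ↔ gauge K z = 1 ∧ gauge K (-z) = 1 := by
  have h0' : -K ∈ nhds (0:E2) := by
    have := neg_mem_nhds_zero (S := K)
    exact this h0
  rw [Set.mem_inter_iff, ← gauge_eq_one_iff_mem_frontier hconv h0,
    ← gauge_eq_one_iff_mem_frontier hconv.neg h0', gauge_neg_set_eq_gauge_neg]

lemma cone_sub {K : Set E2} (hconv : Convex ℝ K) (hcomp : IsCompact K) (h0 : K ∈ nhds (0:E2))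
    {z1 z2 p : E2} (hd : dt z1 z2 ≠ 0) (hcons : Consecutive K z1 z2)
    (hp : p ∈ posHull2 z1 z2) (hp1 : gauge K p = 1) (hp2 : gauge K (-p) < 1)
    {a b : ℝ} (ha : 0 < a) (hb : 0 < b) (hu : a • z1 + b • z2 ∈ K) :
    -(a • z1 + b • z2) ∈ K := by
  set u := a • z1 + b • z2 with hudef
  by_contra hcon
  obtain ⟨c, d, hc, hd', hpe⟩ := hp
  have hg1 : gauge K u ≤ 1 := gauge_le_one_of_mem hu
  have hg2 : 1 < gauge K (-u) := by
    by_contra hle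
    push Not at hle
    rw [gauge_le_one_iff_mem_closure hconv h0, hcomp.isClosed.closure_eq] at hle
    exact hcon hle
  have hcg := continuous_gauge hconv h0
  let f : ℝ → ℝ := fun t => gauge K (u + t • (p - u)) - gauge K (-(u + t • (p - u)))
  have hf : Continuous f := by
    apply Continuous.sub
    · exact hcg.comp (by fun_prop)
    · exact hcg.comp (by fun_prop)
  have hf0 : f 0 ≤ 0 := by simp [f]; linarith
  have hf1e : f 1 = gauge K p - gauge K (-p) := by
    simp only [f, one_smul, add_sub_cancel]
  have hf1 : 0 ≤ f 1 := by rw [hf1e]; linarith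
  obtain ⟨t, ht, hft⟩ := intermediate_value_Icc zero_le_one hf.continuousOn ⟨hf0, hf1⟩
  have ht1 : t ≠ 1 := by
    rintro rfl
    rw [hf1e] at hft
    linarith
  have ht1' : t < 1 := lt_of_le_of_ne ht.2 ht1
  set w := u + t • (p - u) with hw
  have hwe : w = (a * (1 - t) + t * c) • z1 + (b * (1 - t) + t * d) • z2 := by
    rw [hw, hudef, hpe]; module
  have hA : 0 < a * (1 - t) + t * c := by
    have := mul_pos ha (sub_pos.2 ht1')
    have := mul_nonneg ht.1 hc
    linarith
  have hB : 0 < b * (1 - t) + t * d := by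
    have := mul_pos hb (sub_pos.2 ht1')
    have := mul_nonneg ht.1 hd'
    linarith
  have heq : gauge K w = gauge K (-w) := by
    have : gauge K w - gauge K (-w) = 0 := hft
    linarith
  have hw0 : w ≠ 0 := by
    intro h
    have := dt_left z1 z2 (a * (1 - t) + t * c) (b * (1 - t) + t * d)
    rw [← hwe, h] at this
    have h2 : dt 0 z2 = 0 := by simp [dt]
    rw [h2] at this
    exact (mul_ne_zero hA.ne' hd) this.symm
  have hgpos : 0 < gauge K w :=
    (gauge_pos (absorbent_nhds_zero h0) ((NormedSpace.isVonNBounded_iff ℝ).2 hcomp.isBounded)).2 hw0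
  apply hcons
  refine ⟨(gauge K w)⁻¹ • w, ?_, ?_⟩
  · rw [mem_bd hconv h0, ← smul_neg, gauge_smul_of_nonneg (inv_nonneg.2 hgpos.le),
      gauge_smul_of_nonneg (inv_nonneg.2 hgpos.le), ← heq, smul_eq_mul,
      inv_mul_cancel₀ hgpos.ne']
    exact ⟨rfl, rfl⟩
  · rw [hwe, smul_add, smul_smul, smul_smul, ← hwe]
    exact cone_int hd (mul_pos (inv_pos.2 hgpos) hA) (mul_pos (inv_pos.2 hgpos) hB)

lemma side_local {K : Set E2} (hconv : Convex ℝ K) (hcomp : IsCompact K) (h0 : K ∈ nhds (0:E2))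
    {z1 z2 p : E2} (hd : dt z1 z2 ≠ 0) (hcons : Consecutive K z1 z2)
    (hp : p ∈ posHull2 z1 z2) (hp1 : gauge K p = 1) (hp2 : gauge K (-p) < 1) (hz2 : z2 ∈ K)
    {a b : ℝ} (ha : 0 < a) (hu : a • z1 + b • z2 ∈ K) :
    ∃ η : ℝ, 0 < η ∧ -(z2 + η • ((a • z1 + b • z2) - z2)) ∈ K := by
  have hη : 0 < 1 / (2 + |b|) := by positivity
  have hη1 : 1 / (2 + |b|) * (2 + |b|) = 1 := by
    have : 2 + |b| ≠ 0 := by positivity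
    field_simp
  have hb := abs_nonneg b
  have hb' := neg_abs_le b
  set η := 1 / (2 + |b|)
  refine ⟨η, hη, ?_⟩
  have e : z2 + η • ((a • z1 + b • z2) - z2) = (η * a) • z1 + (1 - η + η * b) • z2 := by module
  have hmem : z2 + η • ((a • z1 + b • z2) - z2) ∈ K :=
    hconv.add_smul_sub_mem hz2 hu ⟨hη.le, by nlinarith⟩
  rw [e] at hmem ⊢
  exact cone_sub hconv hcomp h0 hd hcons hp hp1 hp2 (mul_pos hη ha) (by nlinarith) hmem

lemma dt_swap (u v : E2) : dt u v = - dt v u := by simp [dt]; ring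

lemma posHull2_swap {u v p : E2} (h : p ∈ posHull2 u v) : p ∈ posHull2 v u := by
  obtain ⟨a, b, ha, hb, e⟩ := h
  exact ⟨b, a, hb, ha, by rw [e, add_comm]⟩

lemma consec_swap {K : Set E2} {u v : E2} (h : Consecutive K u v) : Consecutive K v u := by
  have : posHull2 u v = posHull2 v u := Set.Subset.antisymm (fun _ h => posHull2_swap h)
    (fun _ h => posHull2_swap h)
  unfold Consecutive at *
  rwa [← this]

lemma local_incl {K : Set E2} (hconv : Convex ℝ K) (hcomp : IsCompact K) (h0 : K ∈ nhds (0:E2))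
    {z1 z2 z3 p q : E2}
    (hz1 : z1 ∈ frontier K ∩ frontier (-K))
    (hz2 : z2 ∈ frontier K ∩ frontier (-K))
    (hz3 : z3 ∈ frontier K ∩ frontier (-K))
    (hd12 : dt z1 z2 ≠ 0) (hd23 : dt z2 z3 ≠ 0) (hd13 : dt z1 z3 ≠ 0)
    (hcons12 : Consecutive K z1 z2) (hcons23 : Consecutive K z2 z3)
    (hp : p ∈ posHull2 z1 z2) (hp1 : gauge K p = 1) (hp2 : gauge K (-p) < 1)
    (hq : q ∈ posHull2 z2 z3) (hq1 : gauge K q = 1) (hq2 : gauge K (-q) < 1)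
    {x : E2} (hx : x ∈ K) : ∃ η : ℝ, 0 < η ∧ -(z2 + η • (x - z2)) ∈ K := by
  have hz2K : z2 ∈ K := hcomp.isClosed.frontier_subset hz2.1
  have hz2N : -z2 ∈ K := hcomp.isClosed.neg.frontier_subset hz2.2
  have hd32 : dt z3 z2 ≠ 0 := by rw [dt_swap]; exact neg_ne_zero.2 hd23
  -- position of z3
  have hz3e := dt_cramer z1 z2 z3 hd12
  set A := dt z3 z2 / dt z1 z2 with hA
  set B := dt z1 z3 / dt z1 z2 with hB
  have hA0 : A ≠ 0 := div_ne_zero hd32 hd12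
  have hB0 : B ≠ 0 := div_ne_zero hd13 hd12
  have hAneg : A < 0 := by
    by_contra hcon
    have hApos : 0 < A := lt_of_le_of_ne (not_lt.1 hcon) hA0.symm
    rcases lt_or_gt_of_ne hB0 with hBn | hBp
    · apply hcons23
      refine ⟨z1, hz1, ?_⟩
      have : z1 = (-B / A) • z2 + (1 / A) • z3 := by
        rw [hz3e]
        match_scalars <;> field_simp <;> ring
      rw [this]
      exact cone_int hd23 (div_pos (by linarith) hApos) (by positivity)
    · apply hcons12
      refine ⟨z3, hz3, ?_⟩
      rw [hz3e]
      exact cone_int hd12 hApos hBp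
  have hxe := dt_cramer z1 z2 x hd12
  set a := dt x z2 / dt z1 z2
  set b := dt z1 x / dt z1 z2
  rcases lt_trichotomy a 0 with ha | ha | ha
  · have hx3 : x = (a / A) • z3 + (b - a * B / A) • z2 := by
      rw [hxe, hz3e]
      match_scalars <;> field_simp <;> ring
    rw [hx3] at hx ⊢
    exact side_local hconv hcomp h0 hd32 (consec_swap hcons23) (posHull2_swap hq) hq1 hq2 hz2K
      (div_pos_of_neg_of_neg ha hAneg) hx
  · rw [ha, zero_smul, zero_add] at hxe
    have hgz := ((mem_bd hconv h0 z2).1 hz2).1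
    have hb1 : b ≤ 1 := by
      by_contra hcon
      have h1 := gauge_le_one_of_mem hx
      rw [hxe, gauge_smul_of_nonneg (by linarith), hgz] at h1
      simp at h1
      linarith
    have hη : 0 < 1 / (2 + |b|) := by positivity
    have hη1 : 1 / (2 + |b|) * (2 + |b|) = 1 := by
      have : 2 + |b| ≠ 0 := by positivity
      field_simp
    have hb := abs_nonneg b
    have hb' := neg_abs_le b
    set η := 1 / (2 + |b|)
    refine ⟨η, hη, ?_⟩
    have e : -(z2 + η • (x - z2)) = (1 - η + η * b) • (-z2) := by rw [hxe]; module
    rw [e]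
    exact hconv.smul_mem_of_zero_mem (mem_of_mem_nhds h0) hz2N ⟨by nlinarith, by nlinarith⟩
  · rw [hxe] at hx ⊢
    exact side_local hconv hcomp h0 hd12 hcons12 hp hp1 hp2 hz2K ha hx

def InA (K : Set E2) (k : ℝ) (g : E2) : Prop :=
  (∀ x ∈ K, -k ≤ inner ℝ g x) ∧ ∃ P ∈ K, inner ℝ g P = (1:ℝ)

lemma strip {K : Set E2} (hconv : Convex ℝ K) (hcomp : IsCompact K) (h0 : (0:E2) ∈ interior K)
    {z : E2} (hz : z ∈ frontier (-K))
    (hloc : ∀ x ∈ K, ∃ η : ℝ, 0 < η ∧ -(z + η • (x - z)) ∈ K) :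
    ∃ w : E2, dt z w = 1 ∧ ∀ u ∈ K, |dt u w| ≤ 1 := by
  have hz' : -z ∉ interior K := by
    intro h
    have h1 : z ∈ interior (-K) := by
      have : interior (-K) = - interior K := by
        exact ((Homeomorph.neg E2).preimage_interior K).symm
      rw [this]
      exact h
    exact hz.2 h1
  obtain ⟨f, hf⟩ := geometric_hahn_banach_open_point hconv.interior isOpen_interior hz'
  have hz0 : f z < 0 := by
    have := hf 0 h0
    simp at this
    exact this
  have hle : ∀ x ∈ K, f x ≤ - f z := by
    have hcl : closure (interior K) ⊆ {x | f x ≤ -f z} := by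
      apply closure_minimal
      · intro a ha
        have := (hf a ha).le
        simpa using this
      · exact isClosed_le f.continuous continuous_const
    intro x hx
    apply hcl
    rw [hconv.closure_interior_eq_closure_of_nonempty_interior ⟨0, h0⟩]
    exact subset_closure hx
  have hge : ∀ x ∈ K, f z ≤ f x := by
    intro x hx
    obtain ⟨η, hη, hm⟩ := hloc x hx
    have h := hle _ hm
    simp at h
    by_contra hcon
    nlinarith
  obtain ⟨n0, n1, hn⟩ : ∃ n0 n1 : ℝ, ∀ u : E2, f u = n0 * u 0 + n1 * u 1 := by
    refine ⟨f (EuclideanSpace.single 0 1), f (EuclideanSpace.single 1 1), fun u => ?_⟩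
    have : u = u 0 • EuclideanSpace.single 0 (1:ℝ) + u 1 • EuclideanSpace.single 1 (1:ℝ) := by
      ext i; fin_cases i <;> simp
    conv_lhs => rw [this]
    simp
    ring
  have key : ∀ u, dt u (!₂[-n1 / f z, n0 / f z]) = f u / f z := by
    intro u
    rw [hn u]
    simp [dt]
    field_simp
    ring
  refine ⟨!₂[-n1 / f z, n0 / f z], ?_, ?_⟩
  · rw [key, div_self hz0.ne]
  · intro u hu
    rw [key, abs_le]
    constructor
    · rw [le_div_iff_of_neg hz0]; linarith [hle u hu]
    · rw [div_le_iff_of_neg hz0]; linarith [hge u hu]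

lemma fin_key {K : Set E2} {k : ℝ} (hk : 0 < k) (hk1 : k < 1) (hT : k ^ 2 ≤ 1 - k)
    {z w : E2} (hz : z ∈ K) (hzn : -z ∈ K) (X Y : E2 → ℝ) (hdec : ∀ u, u = X u • z + Y u • w)
    (hX : ∀ u ∈ K, |X u| ≤ 1) {d e f : E2} (hd : InA K k d) (he : InA K k e) (hf : InA K k f)
    (hdw : 0 < inner ℝ d w) (hew : 0 < inner ℝ e (-w)) (hfw : 0 < inner ℝ f (-w))
    (h1 : 0 ≤ inner ℝ d z / inner ℝ d w + inner ℝ e z / inner ℝ e (-w))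
    (h2 : inner ℝ d z / inner ℝ d w + inner ℝ f z / inner ℝ f (-w) ≤ 0) :
    inner ℝ e z = k := by
  have dec : ∀ g u : E2, inner ℝ g u = inner ℝ g z * X u + inner ℝ g w * Y u := by
    intro g u
    conv_lhs => rw [hdec u]
    rw [inner_add_right, real_inner_smul_right, real_inner_smul_right]
    ring
  have hab : ∀ g, InA K k g → |inner ℝ g z| ≤ k := by
    intro g hg
    have i1 := hg.1 z hz
    have i2 := hg.1 (-z) hzn
    rw [inner_neg_right] at i2
    rw [abs_le]
    constructor <;> linarith
  have hab_e := hab e he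
  have hab_f := hab f hf
  obtain ⟨hd1, P, hP, hdP⟩ := hd
  obtain ⟨he1, Q, hQ, heQ⟩ := he
  obtain ⟨hf1, R, hR, hfR⟩ := hf
  rw [inner_neg_right] at hew hfw h1 h2
  have a1 := hd1 Q hQ
  have a2 := hd1 R hR
  have a3 := he1 P hP
  have a4 := hf1 P hP
  rw [dec] at hdP heQ hfR a1 a2 a3 a4
  apply plane_key k (inner ℝ d z) (inner ℝ d w) (inner ℝ e z) (inner ℝ e w) (inner ℝ f z)
    (inner ℝ f w) (X P) (Y P) (X Q) (Y Q) (X R) (Y R) hk hk1 hT hdw (by linarith) (by linarith)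
    (hX P hP) (hX Q hQ) (hX R hR) hab_e hab_f hdP heQ hfR a1 a2 a3 a4
  · rw [div_add_div _ _ hdw.ne' hew.ne'] at h1
    by_contra hcon
    have := div_neg_of_neg_of_pos (not_le.1 hcon) (mul_pos hdw hew)
    linarith
  · rw [div_add_div _ _ hdw.ne' hfw.ne'] at h2
    by_contra hcon
    have := div_pos (not_le.1 hcon) (mul_pos hdw hfw)
    linarith

lemma extremes {K : Set E2} {k : ℝ} (hcomp : IsCompact K)
    (h0 : (0:E2) ∈ interior K) (z w : E2) (hne : ∀ g, InA K k g → inner ℝ g w ≠ (0:ℝ))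
    (hex : ∃ g, InA K k g ∧ (0:ℝ) ≤ inner ℝ g w) :
    ∃ m M, InA K k m ∧ InA K k M ∧ (0:ℝ) < inner ℝ m w ∧ (0:ℝ) < inner ℝ M w ∧
      ∀ g, InA K k g → (0:ℝ) < inner ℝ g w →
        inner ℝ m z / inner ℝ m w ≤ inner ℝ g z / inner ℝ g w ∧
        inner ℝ g z / inner ℝ g w ≤ inner ℝ M z / inner ℝ M w := by
  obtain ⟨δ, hδ, hball⟩ := Metric.mem_nhds_iff.1 (mem_interior_iff_mem_nhds.1 h0)
  have hbd : ∀ g, InA K k g → g ∈ Metric.closedBall (0:E2) (2 * k / δ) := by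
    intro g hg
    rw [mem_closedBall_zero_iff]
    rcases eq_or_ne g 0 with rfl | hg0
    · obtain ⟨-, P, -, hP⟩ := hg
      simp at hP
    · have hn : 0 < ‖g‖ := norm_pos_iff.2 hg0
      have hk : -((δ / 2 / ‖g‖) • g) ∈ K := by
        apply hball
        rw [mem_ball_zero_iff, norm_neg, norm_smul, Real.norm_of_nonneg (by positivity),
          div_mul_cancel₀ _ hn.ne']
        linarith
      have h := hg.1 _ hk
      rw [inner_neg_right, real_inner_smul_right, real_inner_self_eq_norm_sq] at h
      have e : δ / 2 / ‖g‖ * ‖g‖ ^ 2 = δ / 2 * ‖g‖ := by field_simp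
      rw [e] at h
      rw [le_div_iff₀ hδ]
      linarith
  let C : Set (E2 × E2) := (Metric.closedBall (0:E2) (2 * k / δ) ×ˢ K) ∩
    {q | (∀ x ∈ K, -k ≤ inner ℝ q.1 x) ∧ inner ℝ q.1 q.2 = (1:ℝ) ∧ (0:ℝ) ≤ inner ℝ q.1 w}
  have hC : IsCompact C := by
    apply ((isCompact_closedBall _ _).prod hcomp).inter_right
    have c1 : IsClosed {q : E2 × E2 | ∀ x ∈ K, -k ≤ inner ℝ q.1 x} := by
      simp only [Set.setOf_forall]
      exact isClosed_iInter fun x => isClosed_iInter fun _ =>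
        isClosed_le continuous_const (by fun_prop)
    have c2 : IsClosed {q : E2 × E2 | inner ℝ q.1 q.2 = (1:ℝ)} :=
      isClosed_eq (by fun_prop) continuous_const
    have c3 : IsClosed {q : E2 × E2 | (0:ℝ) ≤ inner ℝ q.1 w} :=
      isClosed_le continuous_const (by fun_prop)
    exact c1.inter (c2.inter c3)
  have hCA : ∀ q ∈ C, InA K k q.1 ∧ 0 < inner ℝ q.1 w := by
    rintro q ⟨⟨_, hq2⟩, hq3, hq4, hq5⟩
    have hA : InA K k q.1 := ⟨hq3, q.2, hq2, hq4⟩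
    exact ⟨hA, lt_of_le_of_ne hq5 (hne _ hA).symm⟩
  have hAC : ∀ g, InA K k g → 0 ≤ inner ℝ g w → ∃ P, (g, P) ∈ C := by
    rintro g hg hgw
    have h1 := hbd g hg
    obtain ⟨h2, P, hP, hgP⟩ := hg
    exact ⟨P, ⟨h1, hP⟩, h2, hgP, hgw⟩
  have hCne : C.Nonempty := by
    obtain ⟨g, hg, hgw⟩ := hex
    obtain ⟨P, hP⟩ := hAC g hg hgw
    exact ⟨_, hP⟩
  have hcont : ContinuousOn (fun q : E2 × E2 => inner ℝ q.1 z / inner ℝ q.1 w) C := by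
    apply ContinuousOn.div
    · fun_prop
    · fun_prop
    · intro q hq
      exact (hCA q hq).2.ne'
  obtain ⟨m, hm, hmin⟩ := hC.exists_isMinOn hCne hcont
  obtain ⟨M, hM, hmax⟩ := hC.exists_isMaxOn hCne hcont
  refine ⟨m.1, M.1, (hCA m hm).1, (hCA M hM).1, (hCA m hm).2, (hCA M hM).2, ?_⟩
  intro g hg hgw
  obtain ⟨P, hP⟩ := hAC g hg hgw.le
  exact ⟨hmin hP, hmax hP⟩

lemma contra {K : Set E2} {k : ℝ} (hconv : Convex ℝ K) (hcomp : IsCompact K)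
    (h0 : (0:E2) ∈ interior K) (hk : 0 < k) (hk1 : k < 1) (hT : k ^ 2 ≤ 1 - k)
    {z : E2} (hz : z ∈ K) (hzn : -z ∈ K) (hzf : z ∈ frontier (-K))
    (hloc : ∀ x ∈ K, ∃ η : ℝ, 0 < η ∧ -(z + η • (x - z)) ∈ K)
    (hopt : ∀ v : E2, ∃ g, InA K k g ∧ inner ℝ g v ≤ (0:ℝ)) : False := by
  obtain ⟨w, hw, hstrip⟩ := strip hconv hcomp h0 hzf hloc
  have hdec : ∀ u, u = dt u w • z + dt z u • w := by
    intro u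
    have := dt_cramer z w u (by rw [hw]; exact one_ne_zero)
    rwa [hw, div_one, div_one] at this
  have hdec' : ∀ u, u = dt u w • z + (-dt z u) • (-w) := by
    intro u
    rw [neg_smul_neg]
    exact hdec u
  have hstrict : ∀ g, InA K k g → inner ℝ g z ≠ k := by
    rintro g ⟨hg, P, hP, hgP⟩ hgz
    obtain ⟨η, hη, hm⟩ := hloc P hP
    have := hg _ hm
    rw [inner_neg_right, inner_add_right, real_inner_smul_right, inner_sub_right, hgP, hgz] at this
    nlinarith
  have hne : ∀ g, InA K k g → inner ℝ g w ≠ (0:ℝ) := by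
    rintro g ⟨hg, P, hP, hgP⟩ hgw
    have i1 := hg z hz
    have i2 := hg (-z) hzn
    rw [inner_neg_right] at i2
    have hX := abs_le.1 (hstrip P hP)
    rw [hdec P, inner_add_right, real_inner_smul_right, real_inner_smul_right, hgw, mul_zero,
      add_zero] at hgP
    nlinarith
  obtain ⟨dm, dM, hdm, hdM, hdmw, hdMw, hD⟩ := extremes hcomp h0 z w hne (by
    obtain ⟨g, hg, h⟩ := hopt (-w)
    rw [inner_neg_right] at h
    exact ⟨g, hg, by linarith⟩)
  obtain ⟨em, eM, hem, heM, hemw, heMw, hE⟩ := extremes hcomp h0 z (-w)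
    (fun g hg => by rw [inner_neg_right]; exact neg_ne_zero.2 (hne g hg)) (by
    obtain ⟨g, hg, h⟩ := hopt w
    exact ⟨g, hg, by rw [inner_neg_right]; linarith⟩)
  have hlow : inner ℝ dm z / inner ℝ dm w + inner ℝ em z / inner ℝ em (-w) ≤ 0 := by
    by_contra hcon
    push Not at hcon
    set σ := inner ℝ dm z / inner ℝ dm w
    set τ := inner ℝ em z / inner ℝ em (-w)
    obtain ⟨g, hg, hgv⟩ := hopt (z + ((τ - σ) / 2) • w)
    rw [inner_add_right, real_inner_smul_right] at hgv
    rcases lt_or_gt_of_ne (hne g hg) with hgw | hgw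
    · have hgw' : 0 < inner ℝ g (-w) := by rw [inner_neg_right]; linarith
      have h := (hE g hg hgw').1
      rw [le_div_iff₀ hgw', inner_neg_right] at h
      nlinarith
    · have h := (hD g hg hgw).1
      rw [le_div_iff₀ hgw] at h
      nlinarith
  have hhigh : 0 ≤ inner ℝ dM z / inner ℝ dM w + inner ℝ eM z / inner ℝ eM (-w) := by
    by_contra hcon
    push Not at hcon
    set σ := inner ℝ dM z / inner ℝ dM w
    set τ := inner ℝ eM z / inner ℝ eM (-w)
    obtain ⟨g, hg, hgv⟩ := hopt (-(z + ((τ - σ) / 2) • w))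
    rw [inner_neg_right, inner_add_right, real_inner_smul_right] at hgv
    rcases lt_or_gt_of_ne (hne g hg) with hgw | hgw
    · have hgw' : 0 < inner ℝ g (-w) := by rw [inner_neg_right]; linarith
      have h := (hE g hg hgw').2
      rw [div_le_iff₀ hgw', inner_neg_right] at h
      nlinarith
    · have h := (hD g hg hgw).2
      rw [div_le_iff₀ hgw] at h
      nlinarith
  rcases le_total 0 (inner ℝ dm z / inner ℝ dm w + inner ℝ eM z / inner ℝ eM (-w)) with h | h
  · exact hstrict eM heM (fin_key hk hk1 hT hz hzn _ _ hdec hstrip hdm heM hem hdmw heMw hemw h hlow)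
  · refine hstrict dM hdM (fin_key (w := -w) hk hk1 hT hz hzn _ _ hdec' hstrip heM hdM hdm heMw
      (by rwa [neg_neg]) (by rwa [neg_neg]) ?_ ?_)
    · rw [neg_neg]; linarith
    · rw [neg_neg]; linarith

lemma asym_facts {K : Set E2} (hconv : Convex ℝ K) (hcomp : IsCompact K) (h0 : K ∈ nhds (0:E2))
    (hs : 1 < minkAsym K) {p : E2} (hp : IsAsymPoint K p) :
    gauge K p = 1 ∧ gauge K (-p) < 1 := by
  refine ⟨(gauge_eq_one_iff_mem_frontier hconv h0).2 hp.1, ?_⟩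
  have h := (hcomp.smul (-(minkAsym K)⁻¹)).isClosed.frontier_subset hp.2
  obtain ⟨q, hq, rfl⟩ := h
  have e : -((fun x => -(minkAsym K)⁻¹ • x) q) = (minkAsym K)⁻¹ • q := by simp
  have hi : (minkAsym K)⁻¹ < 1 := inv_lt_one_of_one_lt₀ hs
  have hi0 : 0 < (minkAsym K)⁻¹ := inv_pos.2 (by linarith)
  rw [e, gauge_smul_of_nonneg hi0.le, smul_eq_mul]
  have := gauge_le_one_of_mem hq
  nlinarith

theorem stmt8 (K : Set E2) (hK : IsConvexBody K) (hc : MinkCentered K)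
    (hs : phiR ≤ minkAsym K) (z1 z2 z3 : E2)
    (hz1 : z1 ∈ frontier K ∩ frontier (-K))
    (hz2 : z2 ∈ frontier K ∩ frontier (-K))
    (hz3 : z3 ∈ frontier K ∩ frontier (-K))
    (hli12 : LinearIndependent ℝ ![z1, z2])
    (hli23 : LinearIndependent ℝ ![z2, z3])
    (hli13 : LinearIndependent ℝ ![z1, z3])
    (hcons12 : Consecutive K z1 z2) (hcons23 : Consecutive K z2 z3)
    (hasym12 : ∃ p, IsAsymPoint K p ∧ p ∈ posHull2 z1 z2) :
    ¬ ∃ p, IsAsymPoint K p ∧ p ∈ posHull2 z2 z3 := by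
  rintro ⟨q, hqa, hq⟩
  obtain ⟨p, hpa, hp⟩ := hasym12
  obtain ⟨hconv, hcomp, hne⟩ := id hK
  have h5 : Real.sqrt 5 ^ 2 = 5 := Real.sq_sqrt (by norm_num)
  have h5' : 0 ≤ Real.sqrt 5 := Real.sqrt_nonneg 5
  have hs1 : 1 < minkAsym K := by
    unfold phiR at hs
    nlinarith
  have hss : minkAsym K + 1 ≤ minkAsym K ^ 2 := by
    unfold phiR at hs
    nlinarith
  have hcent : ∀ x ∈ K, ∃ k ∈ K, x = -(minkAsym K • k) := by
    intro x hx
    obtain ⟨y, hy, hyx⟩ := hc hx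
    refine ⟨-y, hy, ?_⟩
    rw [← hyx, smul_neg, neg_neg]
  have h0 := zero_int (by linarith) hK hcent
  have h0n := mem_interior_iff_mem_nhds.1 h0
  obtain ⟨hp1, hp2⟩ := asym_facts hconv hcomp h0n hs1 hpa
  obtain ⟨hq1, hq2⟩ := asym_facts hconv hcomp h0n hs1 hqa
  have hspos : 0 < minkAsym K := by linarith
  refine contra (K := K) (k := (minkAsym K)⁻¹) (z := z2) hconv hcomp h0 (inv_pos.2 hspos)
    (inv_lt_one_of_one_lt₀ hs1) ?_ (hcomp.isClosed.frontier_subset hz2.1)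
    (hcomp.isClosed.neg.frontier_subset hz2.2) hz2.2 ?_ ?_
  · field_simp
    linarith
  · intro x hx
    exact local_incl hconv hcomp h0n hz1 hz2 hz3 (dt_ne hli12) (dt_ne hli23) (dt_ne hli13)
      hcons12 hcons23 hp hp1 hp2 hq hq1 hq2 hx
  · intro v
    obtain ⟨g, h1, h2, h3⟩ := optimality hK h0 hspos hcent v
    exact ⟨g, ⟨h1, h2⟩, h3⟩
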